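/- Let A ∈ ℝ^{n×n} be nonsingular, k ≥ 1, and let b ∈ ℝ^n be a unit norm vector with d(A, b) > k. Set r_k = GMRES(A, b, k). Then d(Aᵀ, r_k) > k, and b satisfies the cross equality for A and step k if and only if b ∈ K_{k+1}(Aᵀ, r_k). In particular, every unit norm vector b with d(A, b) = n satisfies the cross equality for A and step k = n − 1. -/

import Mathlib

open Polynomial Matrix

/-- The Euclidean norm of a real vector. -/
noncomputable def euclNorm {ι : Type*} [Fintype ι] (v : ι → ℝ) : ℝ :=
  Real.sqrt (∑ i, v i ^ 2)

/-- The Euclidean norm of a complex vector. -/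
noncomputable def euclNormC {ι : Type*} [Fintype ι] (v : ι → ℂ) : ℝ :=
  Real.sqrt (∑ i, ‖v i‖ ^ 2)

/-- The Euclidean inner product of two real vectors. -/
noncomputable def edot {ι : Type*} [Fintype ι] (u v : ι → ℝ) : ℝ := ∑ i, u i * v i

/-- `p ∈ π_k`: real polynomials of degree at most `k` with value `1` at the origin. -/
def IsPik (k : ℕ) (p : Polynomial ℝ) : Prop := p.natDegree ≤ k ∧ p.eval 0 = 1

/-- `p ∈ π_{k,ℂ}`: complex polynomials of degree at most `k` with value `1` at the origin. -/
def IsPikC (k : ℕ) (p : Polynomial ℂ) : Prop := p.natDegree ≤ k ∧ p.eval 0 = 1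

/-- The `k`-th GMRES residual norm `min_{p ∈ π_k} ‖p(A)v‖`. -/
noncomputable def gmresVal {ι : Type*} [Fintype ι] [DecidableEq ι]
    (A : Matrix ι ι ℝ) (k : ℕ) (v : ι → ℝ) : ℝ :=
  sInf {s : ℝ | ∃ p : Polynomial ℝ, IsPik k p ∧ s = euclNorm ((Polynomial.aeval A p).mulVec v)}

/-- The `k`-th worst-case GMRES approximation `Ψ_k(A) = max_{‖v‖=1} min_{p ∈ π_k} ‖p(A)v‖`. -/
noncomputable def Psi {ι : Type*} [Fintype ι] [DecidableEq ι]
    (A : Matrix ι ι ℝ) (k : ℕ) : ℝ :=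
  sSup {r : ℝ | ∃ v : ι → ℝ, euclNorm v = 1 ∧ r = gmresVal A k v}

/-- `d(A)`: the degree of the minimal polynomial of `A`. -/
noncomputable def dA {ι : Type*} [Fintype ι] [DecidableEq ι] (A : Matrix ι ι ℝ) : ℕ :=
  (minpoly ℝ A).natDegree

/-- `d(A,b)`: the smallest degree of a nonzero polynomial `q` with `q(A)b = 0`. -/
noncomputable def dAb {ι : Type*} [Fintype ι] [DecidableEq ι]
    (A : Matrix ι ι ℝ) (b : ι → ℝ) : ℕ :=
  sInf {d : ℕ | ∃ q : Polynomial ℝ, q ≠ 0 ∧ q.natDegree = d ∧ (Polynomial.aeval A q).mulVec b = 0}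

/-- `r = GMRES(A,b,k)`: `r = p(A)b` for some `p ∈ π_k` minimizing `‖p(A)b‖` over `π_k`. -/
def IsGmresRes {ι : Type*} [Fintype ι] [DecidableEq ι]
    (A : Matrix ι ι ℝ) (k : ℕ) (b r : ι → ℝ) : Prop :=
  ∃ p : Polynomial ℝ, IsPik k p ∧ r = (Polynomial.aeval A p).mulVec b ∧
    ∀ q : Polynomial ℝ, IsPik k q → euclNorm r ≤ euclNorm ((Polynomial.aeval A q).mulVec b)

/-- `p` is the `k`-th GMRES polynomial of `A` and `b`: `p ∈ π_k` minimizes `‖p(A)b‖`. -/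
def IsGmresPoly {ι : Type*} [Fintype ι] [DecidableEq ι]
    (A : Matrix ι ι ℝ) (k : ℕ) (b : ι → ℝ) (p : Polynomial ℝ) : Prop :=
  IsPik k p ∧ ∀ q : Polynomial ℝ, IsPik k q →
    euclNorm ((Polynomial.aeval A p).mulVec b) ≤ euclNorm ((Polynomial.aeval A q).mulVec b)

/-- The Krylov subspace `K_k(A,b) = span{b, Ab, …, A^{k-1}b}`. -/
noncomputable def krylov {ι : Type*} [Fintype ι] [DecidableEq ι]
    (A : Matrix ι ι ℝ) (k : ℕ) (b : ι → ℝ) : Submodule ℝ (ι → ℝ) :=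
  Submodule.span ℝ (Set.range fun i : Fin k => (A ^ (i : ℕ)).mulVec b)

/-- `b` satisfies the cross equality for `A` and step `k`. -/
def CrossEq {ι : Type*} [Fintype ι] [DecidableEq ι]
    (A : Matrix ι ι ℝ) (k : ℕ) (b : ι → ℝ) : Prop :=
  ∀ r s : ι → ℝ, IsGmresRes A k b r → IsGmresRes Aᵀ k ((euclNorm r)⁻¹ • r) s →
    b = (euclNorm s)⁻¹ • s

/-- The Krylov matrix `K(v) = [Av, A²v, …, A^k v]`. -/
noncomputable def Kmat {n : ℕ} (A : Matrix (Fin n) (Fin n) ℝ) (k : ℕ) (v : Fin n → ℝ) :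
    Matrix (Fin n) (Fin k) ℝ :=
  Matrix.of fun i j => (A ^ ((j : ℕ) + 1)).mulVec v i

/-- `γ(v) = (K(v)ᵀK(v))⁻¹ K(v)ᵀ v`. -/
noncomputable def gammaVec {n : ℕ} (A : Matrix (Fin n) (Fin n) ℝ) (k : ℕ) (v : Fin n → ℝ) :
    Fin k → ℝ :=
  ((Kmat A k v)ᵀ * Kmat A k v)⁻¹ *ᵥ ((Kmat A k v)ᵀ *ᵥ v)

/-- `g(v) = min_{c ∈ ℝ^k} ‖v - K(v)c‖²`. -/
noncomputable def gFun {n : ℕ} (A : Matrix (Fin n) (Fin n) ℝ) (k : ℕ) (v : Fin n → ℝ) : ℝ :=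
  sInf {s : ℝ | ∃ c : Fin k → ℝ, s = euclNorm (v - Kmat A k v *ᵥ c) ^ 2}

/-- `p(z; c) = 1 - ∑_{j=1}^k c_j z^j`. -/
noncomputable def pPoly {k : ℕ} (c : Fin k → ℝ) : Polynomial ℝ :=
  1 - ∑ j : Fin k, Polynomial.C (c j) * Polynomial.X ^ ((j : ℕ) + 1)

/-- `f(c,v) = ‖p(A;c)v‖²`. -/
noncomputable def fFun {n k : ℕ} (A : Matrix (Fin n) (Fin n) ℝ) (c : Fin k → ℝ)
    (v : Fin n → ℝ) : ℝ :=
  euclNorm ((Polynomial.aeval A (pPoly c)).mulVec v) ^ 2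

/-- `F(c,v) = f(c,v)/(vᵀv)`. -/
noncomputable def FFun {n k : ℕ} (A : Matrix (Fin n) (Fin n) ℝ) (c : Fin k → ℝ)
    (v : Fin n → ℝ) : ℝ :=
  fFun A c v / edot v v

/-- The Toh matrix `A(ω, ε)`. -/
noncomputable def tohMatrix (ω ε : ℝ) : Matrix (Fin 4) (Fin 4) ℝ :=
  !![1, ε, 0, 0; 0, -1, ω / ε, 0; 0, 0, 1, ε; 0, 0, 0, -1]

/-- `p` is a `k`-th worst-case GMRES polynomial of `A`. -/
def IsWCPoly {ι : Type*} [Fintype ι] [DecidableEq ι]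
    (A : Matrix ι ι ℝ) (k : ℕ) (p : Polynomial ℝ) : Prop :=
  IsPik k p ∧ ∃ b : ι → ℝ, euclNorm b = 1 ∧
    (∀ q : Polynomial ℝ, IsPik k q →
      euclNorm ((Polynomial.aeval A p).mulVec b) ≤ euclNorm ((Polynomial.aeval A q).mulVec b)) ∧
    euclNorm ((Polynomial.aeval A p).mulVec b) = Psi A k

/-- The spectral (Euclidean operator) norm of a real matrix. -/
noncomputable def specNorm {ι : Type*} [Fintype ι] (M : Matrix ι ι ℝ) : ℝ :=
  sSup {r : ℝ | ∃ v : ι → ℝ, euclNorm v = 1 ∧ r = euclNorm (M *ᵥ v)}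

/-- The `k`-th ideal GMRES approximation `φ_k(A) = min_{p ∈ π_k} ‖p(A)‖`. -/
noncomputable def phiIdeal {ι : Type*} [Fintype ι] [DecidableEq ι]
    (A : Matrix ι ι ℝ) (k : ℕ) : ℝ :=
  sInf {r : ℝ | ∃ p : Polynomial ℝ, IsPik k p ∧ r = specNorm (Polynomial.aeval A p)}

/-- Complexification of a real matrix. -/
noncomputable def matC {ι : Type*} (A : Matrix ι ι ℝ) : Matrix ι ι ℂ :=
  A.map fun x => (x : ℂ)

/-- Complexification of a real vector. -/
noncomputable def vecC {ι : Type*} (b : ι → ℝ) : ι → ℂ := fun i => (b i : ℂ)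

/-- `Ψ_{k,ℂ,ℝ}(A)`: complex polynomials, real initial vectors. -/
noncomputable def PsiCR {ι : Type*} [Fintype ι] [DecidableEq ι]
    (A : Matrix ι ι ℝ) (k : ℕ) : ℝ :=
  sSup {r : ℝ | ∃ b : ι → ℝ, euclNorm b = 1 ∧
    r = sInf {s : ℝ | ∃ p : Polynomial ℂ, IsPikC k p ∧
      s = euclNormC ((Polynomial.aeval (matC A) p).mulVec (vecC b))}}

/-- `Ψ_{k,ℂ,ℂ}(A)`: complex polynomials, complex initial vectors. -/
noncomputable def PsiCC {ι : Type*} [Fintype ι] [DecidableEq ι]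
    (A : Matrix ι ι ℝ) (k : ℕ) : ℝ :=
  sSup {r : ℝ | ∃ b : ι → ℂ, euclNormC b = 1 ∧
    r = sInf {s : ℝ | ∃ p : Polynomial ℂ, IsPikC k p ∧
      s = euclNormC ((Polynomial.aeval (matC A) p).mulVec b)}}

/-- `Ψ_{k,ℝ,ℂ}(A)`: real polynomials, complex initial vectors. -/
noncomputable def PsiRC {ι : Type*} [Fintype ι] [DecidableEq ι]
    (A : Matrix ι ι ℝ) (k : ℕ) : ℝ :=
  sSup {r : ℝ | ∃ b : ι → ℂ, euclNormC b = 1 ∧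
    r = sInf {s : ℝ | ∃ p : Polynomial ℝ, IsPik k p ∧
      s = euclNormC ((Polynomial.aeval (matC A) (p.map (algebraMap ℝ ℂ))).mulVec b)}}

/-- `φ_{k,ℝ,ℝ}(A)`. -/
noncomputable def phiRR {ι : Type*} [Fintype ι] [DecidableEq ι]
    (A : Matrix ι ι ℝ) (k : ℕ) : ℝ :=
  sInf {r : ℝ | ∃ p : Polynomial ℝ, IsPik k p ∧
    r = sSup {s : ℝ | ∃ b : ι → ℝ, euclNorm b = 1 ∧
      s = euclNorm ((Polynomial.aeval A p).mulVec b)}}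

/-- `φ_{k,ℂ,ℝ}(A)`. -/
noncomputable def phiCR {ι : Type*} [Fintype ι] [DecidableEq ι]
    (A : Matrix ι ι ℝ) (k : ℕ) : ℝ :=
  sInf {r : ℝ | ∃ p : Polynomial ℂ, IsPikC k p ∧
    r = sSup {s : ℝ | ∃ b : ι → ℝ, euclNorm b = 1 ∧
      s = euclNormC ((Polynomial.aeval (matC A) p).mulVec (vecC b))}}

/-- `φ_{k,ℝ,ℂ}(A)`. -/
noncomputable def phiRC {ι : Type*} [Fintype ι] [DecidableEq ι]
    (A : Matrix ι ι ℝ) (k : ℕ) : ℝ :=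
  sInf {r : ℝ | ∃ p : Polynomial ℝ, IsPik k p ∧
    r = sSup {s : ℝ | ∃ b : ι → ℂ, euclNormC b = 1 ∧
      s = euclNormC ((Polynomial.aeval (matC A) (p.map (algebraMap ℝ ℂ))).mulVec b)}}

/-- `φ_{k,ℂ,ℂ}(A)`. -/
noncomputable def phiCC {ι : Type*} [Fintype ι] [DecidableEq ι]
    (A : Matrix ι ι ℝ) (k : ℕ) : ℝ :=
  sInf {r : ℝ | ∃ p : Polynomial ℂ, IsPikC k p ∧
    r = sSup {s : ℝ | ∃ b : ι → ℂ, euclNormC b = 1 ∧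
      s = euclNormC ((Polynomial.aeval (matC A) p).mulVec b)}}


noncomputable def evl {n : ℕ} (A : Matrix (Fin n) (Fin n) ℝ) (b : Fin n → ℝ) :
    ℝ[X] →ₗ[ℝ] (Fin n → ℝ) where
  toFun q := (Polynomial.aeval A q).mulVec b
  map_add' p q := by simp [Matrix.add_mulVec]
  map_smul' c q := by simp [Matrix.smul_mulVec]

theorem evl_apply {n : ℕ} (A : Matrix (Fin n) (Fin n) ℝ) (b : Fin n → ℝ) (q : ℝ[X]) :
    (Polynomial.aeval A q).mulVec b = evl A b q := rfl

theorem evl_one {n : ℕ} (A : Matrix (Fin n) (Fin n) ℝ) (b : Fin n → ℝ) :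
    evl A b 1 = b := by simp [← evl_apply]

theorem evl_smul_vec {n : ℕ} (A : Matrix (Fin n) (Fin n) ℝ) (b : Fin n → ℝ) (c : ℝ) (q : ℝ[X]) :
    evl A (c • b) q = c • evl A b q := by
  simp [← evl_apply, Matrix.mulVec_smul]

theorem euclNorm_sq {n : ℕ} (v : Fin n → ℝ) : euclNorm v ^ 2 = v ⬝ᵥ v := by
  unfold euclNorm
  rw [Real.sq_sqrt (Finset.sum_nonneg fun i _ => sq_nonneg _)]
  simp [dotProduct, sq]

theorem euclNorm_nonneg {n : ℕ} (v : Fin n → ℝ) : 0 ≤ euclNorm v := Real.sqrt_nonneg _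

theorem euclNorm_le_iff {n : ℕ} (v w : Fin n → ℝ) :
    euclNorm v ≤ euclNorm w ↔ v ⬝ᵥ v ≤ w ⬝ᵥ w := by
  rw [← euclNorm_sq, ← euclNorm_sq]
  exact (pow_le_pow_iff_left₀ (euclNorm_nonneg v) (euclNorm_nonneg w) two_ne_zero).symm

theorem aeval_transpose' {n : ℕ} (A : Matrix (Fin n) (Fin n) ℝ) (q : ℝ[X]) :
    Polynomial.aeval Aᵀ q = (Polynomial.aeval A q)ᵀ := by
  induction q using Polynomial.induction_on' with
  | add p q hp hq => simp [hp, hq]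
  | monomial m a => simp [Polynomial.aeval_monomial, Matrix.transpose_pow, Algebra.algebraMap_eq_smul_one]

theorem adj {n : ℕ} (A : Matrix (Fin n) (Fin n) ℝ) (q : ℝ[X]) (r b : Fin n → ℝ) :
    b ⬝ᵥ evl Aᵀ r q = r ⬝ᵥ evl A b q := by
  rw [← evl_apply, ← evl_apply, aeval_transpose', Matrix.mulVec_transpose, dotProduct_comm,
    Matrix.dotProduct_mulVec]

theorem orth {n : ℕ} {A : Matrix (Fin n) (Fin n) ℝ} {k : ℕ} {b r : Fin n → ℝ}
    (h : IsGmresRes A k b r) (q : ℝ[X]) (hq : q.natDegree ≤ k) (h0 : q.eval 0 = 0) :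
    r ⬝ᵥ evl A b q = 0 := by
  obtain ⟨p, ⟨hp, hp0⟩, hr, hmin⟩ := h
  rw [evl_apply] at hr
  have key : ∀ t : ℝ, 0 ≤ 2 * t * (r ⬝ᵥ evl A b q) + t ^ 2 * (evl A b q ⬝ᵥ evl A b q) := by
    intro t
    have := hmin (p + t • q) ⟨?_, by simp [hp0, h0]⟩
    · rw [euclNorm_le_iff, evl_apply, map_add, map_smul, ← hr] at this
      simp only [add_dotProduct, dotProduct_add, smul_dotProduct, dotProduct_smul,
        smul_eq_mul] at this
      rw [dotProduct_comm (evl A b q) r] at this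
      nlinarith
    · exact (Polynomial.natDegree_add_le _ _).trans
        (max_le hp ((Polynomial.natDegree_smul_le _ _).trans hq))
  set x := r ⬝ᵥ evl A b q
  set y := evl A b q ⬝ᵥ evl A b q
  have hy : 0 ≤ y := by simp only [y]; rw [← euclNorm_sq]; positivity
  have h1 := key (-x / (y + 1))
  have hy1 : 0 < y + 1 := by linarith
  have h2 : 2 * (-x / (y + 1)) * x + (-x / (y + 1)) ^ 2 * y
      = - (x ^ 2 * (y + 2) / (y + 1) ^ 2) := by
    field_simp; ring
  rw [h2] at h1
  by_contra hx
  have : 0 < x ^ 2 * (y + 2) / (y + 1) ^ 2 := by positivity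
  linarith

theorem dot_eval {n : ℕ} {A : Matrix (Fin n) (Fin n) ℝ} {k : ℕ} {b r : Fin n → ℝ}
    (h : IsGmresRes A k b r) (q : ℝ[X]) (hq : q.natDegree ≤ k) :
    r ⬝ᵥ evl A b q = q.eval 0 * (r ⬝ᵥ r) := by
  obtain ⟨p, ⟨hp, hp0⟩, hr, hmin⟩ := id h
  rw [evl_apply] at hr
  have := orth h (q - (q.eval 0) • p) ((Polynomial.natDegree_sub_le _ _).trans
        (max_le hq ((Polynomial.natDegree_smul_le _ _).trans hp))) (by simp [hp0])
  rw [map_sub, map_smul, ← hr, dotProduct_sub, dotProduct_smul, smul_eq_mul] at this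
  linarith

theorem gm_unique {n : ℕ} {A : Matrix (Fin n) (Fin n) ℝ} {k : ℕ} {b r : Fin n → ℝ}
    (h : IsGmresRes A k b r) (v : Fin n → ℝ) (q : ℝ[X]) (hq : IsPik k q) (hv : v = evl A b q)
    (ho : ∀ q : ℝ[X], q.natDegree ≤ k → q.eval 0 = 0 → v ⬝ᵥ evl A b q = 0) : r = v := by
  obtain ⟨p, ⟨hp, hp0⟩, hr, hmin⟩ := id h
  rw [evl_apply] at hr
  have hd : (p - q).natDegree ≤ k :=
    (Polynomial.natDegree_sub_le _ _).trans (max_le hp hq.1)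
  have he : (p - q).eval 0 = 0 := by simp [hp0, hq.2]
  have h1 := orth h _ hd he
  have h2 := ho _ hd he
  rw [map_sub, ← hr, ← hv] at h1 h2
  have : (r - v) ⬝ᵥ (r - v) = 0 := by rw [sub_dotProduct, h1, h2, sub_zero]
  exact sub_eq_zero.mp (dotProduct_self_eq_zero.mp this)

theorem gm_exists {n : ℕ} (A : Matrix (Fin n) (Fin n) ℝ) (k : ℕ) (b : Fin n → ℝ) :
    ∃ r, IsGmresRes A k b r := by
  let L : ℝ[X] →ₗ[ℝ] EuclideanSpace ℝ (Fin n) :=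
    (WithLp.linearEquiv 2 ℝ (Fin n → ℝ)).symm.toLinearMap ∘ₗ evl A b
  let V : Submodule ℝ ℝ[X] := Polynomial.degreeLE ℝ k ⊓ LinearMap.ker (Polynomial.leval (0 : ℝ))
  let U := V.map L
  have hV : ∀ q, q ∈ V ↔ q.natDegree ≤ k ∧ q.eval 0 = 0 := by
    intro q
    simp [V, Polynomial.mem_degreeLE, Polynomial.natDegree_le_iff_degree_le, Polynomial.leval]
  obtain ⟨q, hqV, hq⟩ := (Submodule.mem_map).1 (U.starProjection_apply_mem (WithLp.toLp 2 b))
  rw [hV] at hqV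
  have horth : ∀ f : ℝ[X], f.natDegree ≤ k → f.eval 0 = 0 →
      (evl A b (1 - q)) ⬝ᵥ evl A b f = 0 := by
    intro f hf hf0
    have h1 := U.starProjection_inner_eq_zero (WithLp.toLp 2 b) (L f)
      (Submodule.mem_map_of_mem ((hV f).2 ⟨hf, hf0⟩))
    rw [← hq] at h1
    rw [map_sub, evl_one]
    simpa [L, EuclideanSpace.inner_eq_star_dotProduct, dotProduct_comm, PiLp.inner_apply, dotProduct, sub_mul, mul_sub, mul_comm] using h1
  refine ⟨evl A b (1 - q), 1 - q, ⟨?_, by simp [hqV.2]⟩, rfl, ?_⟩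
  · exact (Polynomial.natDegree_sub_le _ _).trans (by simp [hqV.1])
  · intro f hf
    rw [euclNorm_le_iff, evl_apply]
    set w := evl A b (1 - q) with hw
    have h2 := horth (f - (1 - q)) ((Polynomial.natDegree_sub_le _ _).trans (max_le hf.1
      ((Polynomial.natDegree_sub_le _ _).trans (by simp [hqV.1])))) (by simp [hf.2, hqV.2])
    rw [map_sub, ← hw] at h2
    have h3 : evl A b f = w + (evl A b f - w) := by abel
    set z := evl A b f - w
    have hz : 0 ≤ z ⬝ᵥ z := by rw [← euclNorm_sq]; positivity
    rw [h3]
    simp only [add_dotProduct, dotProduct_add]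
    rw [dotProduct_comm z w, h2]
    linarith

theorem mem_krylov {n : ℕ} (A : Matrix (Fin n) (Fin n) ℝ) (k : ℕ) (b v : Fin n → ℝ) :
    v ∈ krylov A (k + 1) b ↔ ∃ q : ℝ[X], q.natDegree ≤ k ∧ v = evl A b q := by
  constructor
  · intro h
    obtain ⟨c, hc⟩ := (Submodule.mem_span_range_iff_exists_fun ℝ).1 h
    refine ⟨∑ i : Fin (k + 1), c i • (X : ℝ[X]) ^ (i : ℕ), ?_, ?_⟩
    · refine Polynomial.natDegree_sum_le_of_forall_le _ _ fun i _ => ?_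
      refine (Polynomial.natDegree_smul_le _ _).trans ?_
      rw [Polynomial.natDegree_X_pow]; omega
    · rw [← hc, map_sum]
      simp [map_smul, ← evl_apply]
  · rintro ⟨q, hq, rfl⟩
    rw [q.as_sum_range_C_mul_X_pow' (Nat.lt_succ_of_le hq), map_sum]
    refine Submodule.sum_mem _ fun i hi => ?_
    rw [← Polynomial.smul_eq_C_mul, map_smul]
    refine Submodule.smul_mem _ _ (Submodule.subset_span ⟨⟨i, Finset.mem_range.1 hi⟩, ?_⟩)
    simp [← evl_apply]

theorem lt_dAb {n : ℕ} (A : Matrix (Fin n) (Fin n) ℝ) (k : ℕ) (b : Fin n → ℝ) :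
    k < dAb A b ↔ ∀ q : ℝ[X], q.natDegree ≤ k → evl A b q = 0 → q = 0 := by
  constructor
  · intro h q hq h0
    by_contra hne
    have : dAb A b ≤ q.natDegree := Nat.sInf_le ⟨q, hne, rfl, h0⟩
    omega
  · intro h
    have hne : {d : ℕ | ∃ q : Polynomial ℝ, q ≠ 0 ∧ q.natDegree = d ∧
        (Polynomial.aeval A q).mulVec b = 0}.Nonempty :=
      ⟨_, A.charpoly, A.charpoly_monic.ne_zero, rfl, by simp [Matrix.aeval_self_charpoly]⟩
    obtain ⟨q, hq, hd, h0⟩ := Nat.sInf_mem hne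
    by_contra hlt
    refine hq (h q ?_ h0)
    rw [hd]; exact not_lt.1 hlt

theorem r_pos {n : ℕ} {A : Matrix (Fin n) (Fin n) ℝ} {k : ℕ} {b r : Fin n → ℝ}
    (hd : k < dAb A b) (h : IsGmresRes A k b r) : 0 < r ⬝ᵥ r := by
  obtain ⟨p, ⟨hp, hp0⟩, hr, -⟩ := h
  have h0 : 0 ≤ r ⬝ᵥ r := by rw [← euclNorm_sq]; positivity
  refine lt_of_le_of_ne h0 fun h1 => ?_
  have h2 := dotProduct_self_eq_zero.mp h1.symm
  have := (lt_dAb A k b).1 hd p hp (hr.symm.trans h2)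
  simp [this] at hp0

theorem d_transpose {n : ℕ} {A : Matrix (Fin n) (Fin n) ℝ} (hA : IsUnit A) {k : ℕ}
    {b r : Fin n → ℝ} (hd : k < dAb A b) (h : IsGmresRes A k b r) : k < dAb Aᵀ r := by
  rw [lt_dAb]
  have hpos := r_pos hd h
  have hinj : Function.Injective (Aᵀ).mulVec :=
    Matrix.mulVec_injective_iff_isUnit.2 ((Matrix.isUnit_transpose A).2 hA)
  have main : ∀ m : ℕ, ∀ q : ℝ[X], q.natDegree ≤ m → m ≤ k → evl Aᵀ r q = 0 → q = 0 := by
    intro m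
    induction m with
    | zero =>
      intro q hq hm h0
      have h1 := dot_eval h q (hq.trans hm)
      rw [← adj, h0, dotProduct_zero] at h1
      have h2 : q.eval 0 = 0 := by
        rcases mul_eq_zero.1 h1.symm with h | h
        · exact h
        · exact absurd h hpos.ne'
      rw [Polynomial.eq_C_of_natDegree_le_zero hq] at h2 ⊢
      simpa using h2
    | succ m ih =>
      intro q hq hm h0
      have h1 := dot_eval h q (hq.trans hm)
      rw [← adj, h0, dotProduct_zero] at h1
      have h2 : q.eval 0 = 0 := by
        rcases mul_eq_zero.1 h1.symm with h | h
        · exact h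
        · exact absurd h hpos.ne'
      have h3 : X * q.divX = q := by
        have := q.X_mul_divX_add
        rwa [Polynomial.coeff_zero_eq_eval_zero, h2, map_zero, add_zero] at this
      have h4 : q.divX = 0 := by
        refine ih _ ?_ (by omega) ?_
        · rw [Polynomial.natDegree_divX_eq_natDegree_tsub_one]; omega
        · apply hinj
          rw [← h3, ← evl_apply, map_mul, Polynomial.aeval_X, ← Matrix.mulVec_mulVec] at h0
          rw [← evl_apply, h0, Matrix.mulVec_zero]
      rw [← h3, h4, mul_zero]
  exact fun q hq h0 => main k q hq le_rfl h0

theorem core {n : ℕ} {A : Matrix (Fin n) (Fin n) ℝ} {k : ℕ}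
    {b r s : Fin n → ℝ} (hb : euclNorm b = 1) (hd : k < dAb A b) (h : IsGmresRes A k b r)
    (hs : IsGmresRes Aᵀ k ((euclNorm r)⁻¹ • r) s) (hm : b ∈ krylov Aᵀ (k + 1) r) :
    b = (euclNorm s)⁻¹ • s := by
  have hpos := r_pos hd h
  obtain ⟨w, hw, hbw⟩ := (mem_krylov _ _ _ _).1 hm
  have hbb : b ⬝ᵥ b = 1 := by rw [← euclNorm_sq, hb, one_pow]
  have hw0 : w.eval 0 * (r ⬝ᵥ r) = 1 := by
    rw [← dot_eval h w hw, ← adj, ← hbw, hbb]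
  have hrn : 0 < euclNorm r := by
    rcases (euclNorm_nonneg r).eq_or_lt with h' | h'
    · rw [← euclNorm_sq, ← h'] at hpos; simp at hpos
    · exact h'
  have hse : s = euclNorm r • b := by
    refine gm_unique hs _ ((r ⬝ᵥ r) • w) ⟨(Polynomial.natDegree_smul_le _ _).trans hw, ?_⟩ ?_ ?_
    · rw [Polynomial.eval_smul, smul_eq_mul, mul_comm, hw0]
    · rw [evl_smul_vec, map_smul, ← hbw, smul_smul, ← euclNorm_sq]
      congr 1
      field_simp
    · intro q hq hq0
      rw [evl_smul_vec, smul_dotProduct, dotProduct_smul, adj, orth h q hq hq0]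
      simp
  have hsn : euclNorm s = euclNorm r := by
    have : euclNorm s ^ 2 = euclNorm r ^ 2 := by
      rw [euclNorm_sq, hse, smul_dotProduct, dotProduct_smul, hbb]
      simp [sq]
    exact (pow_left_inj₀ (euclNorm_nonneg _) (euclNorm_nonneg _) two_ne_zero).1 this
  rw [hsn, hse, smul_smul, inv_mul_cancel₀ hrn.ne', one_smul]

theorem krylov_top {n k : ℕ} (A : Matrix (Fin n) (Fin n) ℝ) (r : Fin n → ℝ) (hn : k + 1 = n)
    (hd : k < dAb A r) : krylov A (k + 1) r = ⊤ := by
  rw [lt_dAb] at hd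
  refine LinearIndependent.span_eq_top_of_card_eq_finrank' ?_ (by simp [hn])
  rw [Fintype.linearIndependent_iff]
  intro c hc
  have h1 := hd (∑ i : Fin (k + 1), c i • (X : ℝ[X]) ^ (i : ℕ)) ?_ ?_
  · intro i
    have := congrArg (fun p => Polynomial.coeff p (i : ℕ)) h1
    simpa [Polynomial.coeff_X_pow, Fin.val_inj] using this
  · refine Polynomial.natDegree_sum_le_of_forall_le _ _ fun i _ => ?_
    refine (Polynomial.natDegree_smul_le _ _).trans ?_
    rw [Polynomial.natDegree_X_pow]; omega
  · rw [← hc, map_sum]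
    simp [map_smul, ← evl_apply]

theorem cross_equality_characterization {n : ℕ} (A : Matrix (Fin n) (Fin n) ℝ)
    (hA : IsUnit A) (k : ℕ) (hk : 1 ≤ k)
    (b : Fin n → ℝ) (hb : euclNorm b = 1) (hd : k < dAb A b)
    (r : Fin n → ℝ) (hr : IsGmresRes A k b r) :
    k < dAb Aᵀ r ∧
    (CrossEq A k b ↔ b ∈ krylov Aᵀ (k + 1) r) ∧
    (∀ b' : Fin n → ℝ, euclNorm b' = 1 → dAb A b' = n → CrossEq A (n - 1) b') := by
  refine ⟨d_transpose hA hd hr, ⟨?_, ?_⟩, ?_⟩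
  · intro hc
    obtain ⟨s, hs⟩ := gm_exists Aᵀ k ((euclNorm r)⁻¹ • r)
    have h1 := hc r s hr hs
    obtain ⟨p, ⟨hp, -⟩, hsp, -⟩ := hs
    rw [evl_apply, evl_smul_vec] at hsp
    rw [h1, hsp]
    exact Submodule.smul_mem _ _ (Submodule.smul_mem _ _ ((mem_krylov _ _ _ _).2 ⟨p, hp, rfl⟩))
  · intro hm r' s hr' hs
    obtain ⟨p, hp, hrp, -⟩ := id hr
    have hrr : r' = r := gm_unique hr' r p hp hrp fun q hq h0 => orth hr q hq h0
    subst hrr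
    exact core hb hd hr hs hm
  · intro b' hb' hd' r' s hr' hs
    have hn : n - 1 + 1 = n := by
      rcases n with _ | n
      · simp [euclNorm] at hb'
      · simp
    have hlt : n - 1 < dAb A b' := by omega
    refine core hb' hlt hr' hs ?_
    rw [krylov_top Aᵀ r' hn (d_transpose hA hlt hr')]
    trivial
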